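/- Assume 𝔤 is simple. If Tor(Γ_𝔨) is not cyclic, then for every group homomorphism χ : Tor(Γ_𝔨) → ℂ∖{0} there exists a root α ∈ Ω whose image ᾱ lies in Tor(Γ_𝔨), satisfies ᾱ ≠ 0, and χ(ᾱ) = 1; that is, the kernel of any character of Tor(Γ_𝔨) contains a non-zero image of a root. -/

import Mathlib

open LieAlgebra

section CombinatorialDefs

variable {V : Type*} [AddCommGroup V] [Module ℂ V]

/-- `P` is a closed symmetric subsystem of `Ω`: `P ⊆ Ω`, `P = -P`, and `P` is closed
under addition within `Ω`. -/
def IsClosedSymmetricSubsystem (Ω P : Set V) : Prop :=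
  P ⊆ Ω ∧ (∀ a ∈ P, -a ∈ P) ∧ ∀ a ∈ P, ∀ b ∈ P, a + b ∈ Ω → a + b ∈ P

/-- `Pi` is a system of simple roots of `Q`: a linearly independent subset of `Q` such that
every element of `Q` is an integral linear combination of elements of `Pi` with coefficients
all nonnegative or all nonpositive. -/
def IsSimpleSystem (Q Pi : Set V) : Prop :=
  Pi ⊆ Q ∧ LinearIndependent ℂ (Subtype.val : Pi → V) ∧
    ∀ q ∈ Q, ∃ c : V →₀ ℤ, (c.support : Set V) ⊆ Pi ∧
      q = c.sum (fun v n => n • v) ∧ ((∀ v, 0 ≤ c v) ∨ (∀ v, c v ≤ 0))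

/-- The Levi procedure: `Q' = ℤΣ ∩ Q` for a subset `Sig` of a system of simple roots of `Q`. -/
def LeviStep (Q Q' : Set V) : Prop :=
  ∃ Pi Sig : Set V, IsSimpleSystem Q Pi ∧ Sig ⊆ Pi ∧
    Q' = {q ∈ Q | q ∈ AddSubgroup.closure Sig}

/-- The Dynkin procedure: `Q'` consists of those elements of `Q` whose coefficient of `α`
in the expansion in the simple system `Pi` is divisible by `n`. -/
def DynkinStep (Q Q' : Set V) : Prop :=
  ∃ Pi : Set V, IsSimpleSystem Q Pi ∧ ∃ α ∈ Pi, ∃ n : ℕ, 0 < n ∧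
    Q' = {β ∈ Q | ∃ c : V →₀ ℤ, (c.support : Set V) ⊆ Pi ∧
      β = c.sum (fun v k => k • v) ∧ (n : ℤ) ∣ c α}

end CombinatorialDefs

section LieSetup

variable (L : Type*) [LieRing L] [LieAlgebra ℂ L] [FiniteDimensional ℂ L]
  (H : LieSubalgebra ℂ L) [H.IsCartanSubalgebra]

/-- The set `Ω` of roots of `L` with respect to the Cartan subalgebra `H`, regarded as
(nonzero) linear functionals on `H` with nonzero root space. -/
def lieRoots : Set (Module.Dual ℂ H) :=
  {α | α ≠ 0 ∧ rootSpace H ⇑α ≠ ⊥}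

/-- The group `Γ_𝔨 = ℤΩ / ℤP`. -/
abbrev GammaK (P : Set (Module.Dual ℂ H)) : Type _ :=
  AddSubgroup.closure (lieRoots L H) ⧸
    (AddSubgroup.closure P).addSubgroupOf (AddSubgroup.closure (lieRoots L H))

/-- The image `ᾱ` of a root `α` in `Γ_𝔨 = ℤΩ / ℤP`. -/
def rootImage (P : Set (Module.Dual ℂ H)) {α : Module.Dual ℂ H}
    (hα : α ∈ lieRoots L H) : GammaK L H P :=
  QuotientAddGroup.mk ⟨α, AddSubgroup.subset_closure hα⟩

/-- The subspace `𝔨 = 𝔥 ⊕ ⨁_{α ∈ P} 𝔤_α` of `L`. -/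
noncomputable def lieK (P : Set (Module.Dual ℂ H)) : Submodule ℂ L :=
  H.toSubmodule ⊔ ⨆ α ∈ P, (rootSpace H ⇑α : LieSubmodule ℂ H L).toSubmodule

/-- The subspace `𝔪 = ⨁_{γ ∈ Ω \ P} 𝔤_γ` of `L`. -/
noncomputable def lieM (P : Set (Module.Dual ℂ H)) : Submodule ℂ L :=
  ⨆ γ ∈ lieRoots L H \ P, (rootSpace H ⇑γ : LieSubmodule ℂ H L).toSubmodule

end LieSetup

/-!
Suppose that no root with nonzero torsion image in `Γ_𝔨` lies in the kernel of the character. As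
`Tor(Γ_𝔨)` splits off and `χ` has cyclic image, there are `n > 0` and an integral functional `g` on
the root lattice such that the roots with zero image in `Γ_𝔨` are exactly those on which `g` is
divisible by `n`. Translating `g` by multiples of `n` times coroots moves it into the closed alcove
`|g| ≤ n`, so that these roots take only the values `0` and `±n`. In a base on which `g ≥ 0`, each
root of value `n` is congruent, modulo the span of the roots of value `0`, to a dominant root; two
dominant roots of an irreducible system are never orthogonal, so they differ by a root when
distinct, and all roots of value `n` are congruent. Hence `ℤP` is a primitive sublattice plus one
generator, and `Tor(Γ_𝔨)` is cyclic.
-/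

open Module RootPairing

section AbelianGroups

variable {A B : Type*} [AddCommGroup A] [AddCommGroup B]

lemma isAddCyclic_of_forall_smul_mem_span_singleton [Module.Finite ℤ A] [IsTorsionFree ℤ A]
    (θ : A) (h : ∀ x : A, ∃ k : ℤ, k ≠ 0 ∧ k • x ∈ Submodule.span ℤ {θ}) : IsAddCyclic A := by
  have htorsion : IsTorsion ℤ (A ⧸ Submodule.span ℤ {θ}) := fun y ↦ by
    obtain ⟨x, rfl⟩ := Submodule.Quotient.mk_surjective _ y
    obtain ⟨k, hk, hkx⟩ := h x
    exact ⟨⟨k, mem_nonZeroDivisors_of_ne_zero hk⟩, (Submodule.Quotient.mk_eq_zero _).2 hkx⟩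
  have hrank : finrank ℤ A ≤ 1 := by
    rw [← (Submodule.span ℤ {θ}).finrank_quotient_add_finrank,
      finrank_eq_zero_iff_isTorsion.2 htorsion, zero_add]
    simpa using finrank_span_le_card (R := ℤ) {θ}
  exact ⟨finrank_le_one_iff.1 hrank⟩

lemma isAddCyclic_torsion_of_ker_eq_span_singleton [Module.Finite ℤ A] [IsTorsionFree ℤ A]
    {f : A →ₗ[ℤ] B} (hf : Function.Surjective f) {θ : A}
    (hker : LinearMap.ker f = Submodule.span ℤ {θ}) :
    IsAddCyclic (AddCommGroup.torsion B) := by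
  let T : Submodule ℤ A := (AddCommGroup.torsion B).toIntSubmodule.comap f
  have hθ : θ ∈ T := by
    have : f θ = 0 := LinearMap.mem_ker.1 (hker ▸ Submodule.mem_span_singleton_self θ)
    simp [T, this, zero_mem]
  have : IsAddCyclic T := by
    refine isAddCyclic_of_forall_smul_mem_span_singleton (⟨θ, hθ⟩ : T) fun x ↦ ?_
    obtain ⟨k, hk, hkx⟩ := isOfFinAddOrder_iff_nsmul_eq_zero.1 (x.2 : IsOfFinAddOrder (f x))
    refine ⟨k, by exact_mod_cast hk.ne', ?_⟩
    have hmem : (k : ℤ) • (x : A) ∈ LinearMap.ker f := by simpa using hkx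
    obtain ⟨m, hm⟩ := Submodule.mem_span_singleton.1 (hker ▸ hmem)
    exact Submodule.mem_span_singleton.2 ⟨m, Subtype.ext hm⟩
  let fT : T →+ AddCommGroup.torsion B :=
    (f.toAddMonoidHom.comp T.subtype.toAddMonoidHom).codRestrict _ fun x ↦ x.2
  refine isAddCyclic_of_surjective fT fun ⟨y, hy⟩ ↦ ?_
  obtain ⟨x, rfl⟩ := hf y
  exact ⟨⟨x, hy⟩, rfl⟩

lemma isAddCyclic_torsion_of_ker_eq_sup_span_singleton [Module.Finite ℤ A]
    {f : A →ₗ[ℤ] B} (hf : Function.Surjective f) {D : Submodule ℤ A} [IsTorsionFree ℤ (A ⧸ D)]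
    {θ : A} (hker : LinearMap.ker f = D ⊔ Submodule.span ℤ {θ}) :
    IsAddCyclic (AddCommGroup.torsion B) := by
  have hD : D ≤ LinearMap.ker f := hker ▸ le_sup_left
  refine isAddCyclic_torsion_of_ker_eq_span_singleton (f := D.liftQ f hD) (θ := D.mkQ θ)
    (fun y ↦ (hf y).imp' D.mkQ fun x hx ↦ by simpa using hx) ?_
  rw [Submodule.ker_liftQ, hker, Submodule.map_sup, Submodule.mkQ_map_self, bot_sup_eq,
    Submodule.map_span, Set.image_singleton]

lemma exists_retraction_of_projective_quotient {R M : Type*} [Ring R] [AddCommGroup M] [Module R M]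
    (p : Submodule R M) [Projective R (M ⧸ p)] : ∃ r : M →ₗ[R] p, ∀ x : p, r x = x := by
  obtain ⟨s, hs⟩ := projective_lifting_property p.mkQ .id p.mkQ_surjective
  have hmem (x : M) : x - s (p.mkQ x) ∈ p := by
    have : p.mkQ (s (p.mkQ x)) = p.mkQ x := LinearMap.congr_fun hs (p.mkQ x)
    refine p.ker_mkQ.le ?_
    rw [LinearMap.mem_ker, map_sub, this, sub_self]
  refine ⟨(LinearMap.id - s ∘ₗ p.mkQ).codRestrict p hmem, fun x ↦ Subtype.ext ?_⟩
  have hx : p.mkQ x = 0 := (Submodule.Quotient.mk_eq_zero p).2 x.2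
  simp [-Submodule.mkQ_apply, hx]

instance isTorsionFree_quotient_torsion :
    IsTorsionFree ℤ (B ⧸ (AddCommGroup.torsion B).toIntSubmodule) := by
  rw [← Submodule.torsion_int, Submodule.toAddSubgroup_toIntSubmodule]
  infer_instance

instance finite_torsion [Module.Finite ℤ B] : Finite (AddCommGroup.torsion B) :=
  have : AddGroup.FG (AddCommGroup.torsion B) :=
    Module.Finite.iff_addGroup_fg.1
      (inferInstance : Module.Finite ℤ (AddCommGroup.torsion B).toIntSubmodule)
  AddCommGroup.finite_of_fg_isAddTorsion _ AddCommMonoid.addTorsion.isAddTorsion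

lemma exists_dual_int_forall_apply_ne_zero [Module.Finite ℤ A] [IsTorsionFree ℤ A]
    {κ : Type*} [Finite κ] {v : κ → A} (hv : ∀ i, v i ≠ 0) :
    ∃ h : Dual ℤ A, ∀ i, h (v i) ≠ 0 := by
  have := Fintype.ofFinite κ
  by_contra! hcover
  let p (i : κ) : Submodule ℤ (Dual ℤ A) := LinearMap.ker (Dual.eval ℤ A (v i))
  obtain ⟨i, -, hi⟩ := Submodule.exists_finiteIndex_of_cover (s := Finset.univ) (p := p)
    (Set.eq_univ_of_forall fun h ↦ by simpa [p] using hcover h)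
  refine hv i ((forall_dual_apply_eq_zero_iff ℤ (v i)).1 fun h ↦ ?_)
  have hmul : ((p i).toAddSubgroup.index • h) (v i) = 0 :=
    AddSubgroup.nsmul_index_mem (p i).toAddSubgroup h
  rw [LinearMap.smul_apply] at hmul
  exact (smul_eq_zero.1 hmul).resolve_left hi.index_ne_zero

lemma exists_zmod_apply_eq_zero_iff_mem [Module.Finite ℤ B]
    (N : AddSubgroup (AddCommGroup.torsion B)) [IsAddCyclic (AddCommGroup.torsion B ⧸ N)] :
    ∃ m : ℕ, m ≠ 0 ∧ ∃ c : B →ₗ[ℤ] ZMod m, ∀ x : AddCommGroup.torsion B, c x = 0 ↔ x ∈ N := by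
  obtain ⟨r, hr⟩ : ∃ r : B →+ AddCommGroup.torsion B, ∀ x : AddCommGroup.torsion B, r x = x :=
    (exists_retraction_of_projective_quotient (AddCommGroup.torsion B).toIntSubmodule).imp'
      LinearMap.toAddMonoidHom fun _ ↦ id
  let e := (zmodAddCyclicAddEquiv ‹IsAddCyclic (AddCommGroup.torsion B ⧸ N)›).symm
  let c := e.toAddMonoidHom.comp ((QuotientAddGroup.mk' N).comp r)
  exact ⟨_, Nat.card_pos.ne', c.toIntLinearMap, fun x ↦ by simp [c, hr]⟩

lemma exists_pos_forall_abs_lt {κ : Type*} [Finite κ] (u : κ → ℤ) :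
    ∃ k : ℤ, 0 < k ∧ ∀ i, |u i| < k := by
  obtain ⟨k, hk⟩ := (Set.finite_range fun i ↦ |u i|).bddAbove
  refine ⟨max k 0 + 1, by positivity, fun i ↦ ?_⟩
  exact Int.lt_add_one_of_le ((hk ⟨i, rfl⟩).trans (le_max_left k 0))

lemma exists_dual_int_dvd_imp_mem [Module.Finite ℤ A] [Free ℤ A] [Module.Finite ℤ B]
    (f : A →ₗ[ℤ] B) {κ : Type*} [Finite κ] (v : κ → A)
    (N : AddSubgroup (AddCommGroup.torsion B)) [IsAddCyclic (AddCommGroup.torsion B ⧸ N)] :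
    ∃ (n : ℤ) (g : Dual ℤ A), 0 < n ∧ (∀ x, f x = 0 → n ∣ g x) ∧
      ∀ i, n ∣ g (v i) → ∃ h : f (v i) ∈ AddCommGroup.torsion B, ⟨f (v i), h⟩ ∈ N := by
  obtain ⟨m, hm, c, hc⟩ := exists_zmod_apply_eq_zero_iff_mem N
  obtain ⟨c', hc'⟩ := projective_lifting_property (Int.castAddHom (ZMod m)).toIntLinearMap
    (c ∘ₗ f) ZMod.intCast_surjective
  have hc' (x : A) : (m : ℤ) ∣ c' x ↔ c (f x) = 0 := by
    rw [← ZMod.intCast_zmod_eq_zero_iff_dvd]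
    exact Eq.congr (LinearMap.congr_fun hc' x) rfl
  let T : Submodule ℤ B := (AddCommGroup.torsion B).toIntSubmodule
  obtain ⟨h, hh⟩ := exists_dual_int_forall_apply_ne_zero
    (v := fun i : {i // f (v i) ∉ T} ↦ T.mkQ (f (v i))) (by simp)
  obtain ⟨k, hk0, hk⟩ := exists_pos_forall_abs_lt fun i ↦ h (T.mkQ (f (v i)))
  refine ⟨m * k, k • c' + h ∘ₗ T.mkQ ∘ₗ f, by positivity, fun x hx ↦ ?_, fun i hi ↦ ?_⟩
  · have : (m : ℤ) ∣ c' x := (hc' x).2 (by rw [hx, map_zero])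
    simpa [hx, mul_comm] using mul_dvd_mul_left k this
  · replace hi : m * k ∣ k * c' (v i) + h (T.mkQ (f (v i))) := hi
    have hzero : h (T.mkQ (f (v i))) = 0 :=
      Int.eq_zero_of_abs_lt_dvd
        ((dvd_add_right (dvd_mul_right _ _)).1 ((dvd_mul_left _ _).trans hi)) (hk i)
    have hmem : f (v i) ∈ T := by_contra fun hi ↦ hh ⟨i, hi⟩ hzero
    rw [hzero, add_zero, mul_comm, mul_dvd_mul_iff_left hk0.ne', hc'] at hi
    exact ⟨hmem, (hc ⟨_, hmem⟩).1 hi⟩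

lemma isAddCyclic_quotient_ker_addChar {T R : Type*} [AddCommGroup T] [Finite T] [CommRing R]
    [IsDomain R] (ψ : AddChar T R) : IsAddCyclic (T ⧸ ψ.toAddMonoidHom.ker) := by
  let f : Multiplicative (T ⧸ ψ.toAddMonoidHom.ker) →* R :=
    AddMonoidHom.toMultiplicativeLeft (QuotientAddGroup.lift _ ψ.toAddMonoidHom le_rfl)
  have hf : Function.Injective f := by
    rw [injective_iff_map_eq_one]
    rintro ⟨x⟩ hx
    exact (QuotientAddGroup.eq_zero_iff x).2 hx
  exact isCyclic_multiplicative_iff.1 (isCyclic_of_injective_ringHom f hf)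

end AbelianGroups

section Lattice

lemma eq_zero_or_eq_or_eq_neg_of_dvd_of_abs_le {m n : ℤ} (hdvd : n ∣ m) (hle : |m| ≤ n) :
    m = 0 ∨ m = n ∨ m = -n := by
  refine or_iff_not_imp_left.2 fun hm ↦ (abs_eq ((abs_nonneg m).trans hle)).1 ?_
  exact hle.antisymm (Int.le_of_dvd (abs_pos.2 hm) ((dvd_abs n m).2 hdvd))

lemma isTorsionFree_quotient_span_basis_image {R A : Type*} [CommRing R] [IsDomain R]
    [AddCommGroup A] [Module R A] {ι : Type*} (v : Basis ι R A) (s : Set ι) :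
    IsTorsionFree R (A ⧸ Submodule.span R (v '' s)) := by
  refine .of_smul_eq_zero fun r y hy ↦ or_iff_not_imp_left.2 fun hr ↦ ?_
  obtain ⟨x, rfl⟩ := Submodule.Quotient.mk_surjective _ y
  rw [← Submodule.Quotient.mk_smul, Submodule.Quotient.mk_eq_zero, v.mem_span_image, map_smul,
    Finsupp.support_smul_eq hr] at hy
  exact (Submodule.Quotient.mk_eq_zero _).2 (v.mem_span_image.2 hy)

end Lattice

section RootSystem

variable {ι K M N : Type*} [Field K] [AddCommGroup M] [Module K M] [AddCommGroup N] [Module K N]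
  {P : RootPairing ι K M N}

lemma rootSpanMem_eq_add {i j k : ι} (h : P.root k = P.root i + P.root j) :
    P.rootSpanMem ℤ k = P.rootSpanMem ℤ i + P.rootSpanMem ℤ j :=
  Subtype.ext h

lemma rootSpanMem_eq_sub {i j k : ι} (h : P.root k = P.root i - P.root j) :
    P.rootSpanMem ℤ k = P.rootSpanMem ℤ i - P.rootSpanMem ℤ j :=
  Subtype.ext h

/-- The sublattice spanned by the roots on which an integral functional `g` vanishes, that is, by
the Levi subsystem cut out by `g`. -/
def leviSpan (g : Dual ℤ (P.rootSpan ℤ)) : Submodule ℤ (P.rootSpan ℤ) :=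
  .span ℤ (P.rootSpanMem ℤ '' {i | g (P.rootSpanMem ℤ i) = 0})

lemma rootSpanMem_mem_leviSpan {g : Dual ℤ (P.rootSpan ℤ)} {i : ι}
    (hi : g (P.rootSpanMem ℤ i) = 0) : P.rootSpanMem ℤ i ∈ leviSpan g :=
  Submodule.subset_span ⟨i, hi, rfl⟩

lemma rootSpanMem_reflectionPerm [P.IsCrystallographic] (i j : ι) :
    P.rootSpanMem ℤ (P.reflectionPerm i j) =
      P.rootSpanMem ℤ j - P.pairingIn ℤ j i • P.rootSpanMem ℤ i := by
  refine Subtype.ext ?_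
  change P.root (P.reflectionPerm i j) = P.root j - P.pairingIn ℤ j i • P.root i
  rw [root_reflectionPerm, reflection_apply_root' ℤ]

variable [CharZero K]

instance isTorsionFree_rootSpan : IsTorsionFree ℤ (P.rootSpan ℤ) := by
  have : IsAddTorsionFree M := .of_isTorsionFree K M
  infer_instance

lemma exists_pairing_ne_zero_and_pairing_ne_zero (P : RootPairing ι K M N) [P.IsIrreducible]
    (i j : ι) :
    ∃ k, P.pairing k i ≠ 0 ∧ P.pairing k j ≠ 0 := by
  by_contra! horth
  let s : Set ι := {k | P.pairing k i ≠ 0}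
  have hspan : Submodule.span K (P.root '' s) = ⊤ := by
    refine span_root_image_eq_top_of_forall_orthogonal P s ⟨i, by simp [s]⟩ fun d hd c hc ↦ ?_
    have hdi : P.pairing d i = 0 := by_contra fun h ↦ hd (Submodule.subset_span ⟨d, h, rfl⟩)
    have hmem : P.reflectionPerm d c ∈ s := by
      have : P.pairing (P.reflectionPerm d c) i = P.pairing c i := by
        rw [← root_coroot'_eq_pairing, root_reflectionPerm, reflection_apply_root]
        simp [hdi]
      simpa only [s, Set.mem_ofPred_eq, this] using hc
    have hcd : P.pairing c d = 0 := by
      by_contra hcd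
      refine hd ((Submodule.smul_mem_iff _ hcd).1 ?_)
      have : P.pairing c d • P.root d = P.root c - P.root (P.reflectionPerm d c) := by
        rw [root_reflectionPerm, reflection_apply_root, sub_sub_cancel]
      rw [this]
      exact sub_mem (Submodule.subset_span ⟨c, hc, rfl⟩) (Submodule.subset_span ⟨_, hmem, rfl⟩)
    exact ⟨P.pairing_eq_zero_iff.1 hcd, hcd⟩
  have hker : Submodule.span K (P.root '' s) ≤ LinearMap.ker (P.coroot' j) := by
    rw [Submodule.span_le]
    rintro _ ⟨k, hk, rfl⟩
    exact horth k hk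
  have hjj : P.pairing j j = 0 := hker (hspan ▸ Submodule.mem_top : P.root j ∈ _)
  simp at hjj

variable [P.IsCrystallographic]

section Alcove

variable (g : Dual ℤ (P.rootSpan ℤ))

lemma two_mul_sum_apply_mul_pairingIn [Fintype ι] (j : ι) :
    2 * ∑ k, g (P.rootSpanMem ℤ k) * P.pairingIn ℤ k j =
      g (P.rootSpanMem ℤ j) * ∑ k, P.pairingIn ℤ k j ^ 2 := by
  have hreflect : ∑ k, g (P.rootSpanMem ℤ k) * P.pairingIn ℤ k j =
      ∑ k, (g (P.rootSpanMem ℤ k) - P.pairingIn ℤ k j * g (P.rootSpanMem ℤ j)) *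
        -P.pairingIn ℤ k j := by
    rw [← (P.reflectionPerm j).sum_comp]
    refine Finset.sum_congr rfl fun k _ ↦ ?_
    rw [rootSpanMem_reflectionPerm, ← P.pairingIn_reflectionPerm,
      P.pairingIn_reflectionPerm_self_right, map_sub, map_smul, smul_eq_mul]
  rw [two_mul]
  nth_rw 1 [hreflect]
  rw [← Finset.sum_add_distrib, Finset.mul_sum]
  exact Finset.sum_congr rfl fun k _ ↦ by ring

lemma sum_sq_sub_smul_coroot'In [Fintype ι] (n : ℤ) (j : ι) :
    ∑ k, (g - n • P.coroot'In ℤ j) (P.rootSpanMem ℤ k) ^ 2 =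
      ∑ k, g (P.rootSpanMem ℤ k) ^ 2 +
        n * (n - g (P.rootSpanMem ℤ j)) * ∑ k, P.pairingIn ℤ k j ^ 2 := by
  calc
    _ = ∑ k, (g (P.rootSpanMem ℤ k) ^ 2 - n * 2 * (g (P.rootSpanMem ℤ k) * P.pairingIn ℤ k j) +
          n ^ 2 * P.pairingIn ℤ k j ^ 2) := by
      refine Finset.sum_congr rfl fun k _ ↦ ?_
      simp only [LinearMap.sub_apply, LinearMap.smul_apply, coroot'In_rootSpanMem_eq_pairingIn,
        smul_eq_mul]
      ring
    _ = _ := by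
      rw [Finset.sum_add_distrib, Finset.sum_sub_distrib, ← Finset.mul_sum, ← Finset.mul_sum,
        mul_assoc n, two_mul_sum_apply_mul_pairingIn]
      ring

-- Among the functionals congruent to `g` mod `n`, one with minimal sum of squares over the roots
-- cannot be improved by subtracting `n` times a coroot.
lemma exists_dual_forall_dvd_sub_and_abs_le [Finite ι] {n : ℤ} (hn : 0 < n) :
    ∃ g' : Dual ℤ (P.rootSpan ℤ),
      (∀ x, n ∣ g' x - g x) ∧ ∀ i, |g' (P.rootSpanMem ℤ i)| ≤ n := by
  have := Fintype.ofFinite ι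
  let E (g' : Dual ℤ (P.rootSpan ℤ)) : ℕ := ∑ k, (g' (P.rootSpanMem ℤ k)).natAbs ^ 2
  have hE (g') : (E g' : ℤ) = ∑ k, g' (P.rootSpanMem ℤ k) ^ 2 := by simp [E]
  obtain ⟨g', hg', hmin⟩ := exists_minimalFor_of_wellFoundedLT
    (fun g' : Dual ℤ (P.rootSpan ℤ) ↦ ∀ x, n ∣ g' x - g x) E ⟨g, by simp⟩
  have hle (i : ι) : g' (P.rootSpanMem ℤ i) ≤ n := by
    by_contra! hi
    have hpos : 0 < ∑ k, P.pairingIn ℤ k i ^ 2 :=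
      Finset.sum_pos' (fun _ _ ↦ sq_nonneg _) ⟨i, Finset.mem_univ i, by simp⟩
    have hlt : E (g' - n • P.coroot'In ℤ i) < E g' := by
      zify
      rw [hE, hE, sum_sq_sub_smul_coroot'In]
      nlinarith [mul_pos (mul_pos hn (sub_pos.2 hi)) hpos]
    refine (hmin (fun x ↦ ?_) hlt.le).not_gt hlt
    rw [LinearMap.sub_apply, sub_right_comm]
    exact dvd_sub (hg' x) (by simp)
  refine ⟨g', hg', fun i ↦ abs_le'.2 ⟨hle i, ?_⟩⟩
  rw [← map_neg, ← P.rootSpanMem_reflectionPerm_self]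
  exact hle _

end Alcove

section Base

variable {b : P.Base}

/-- A root is dominant for a base if its coroot pairs nonnegatively with all positive roots. -/
def IsDominantRoot (b : P.Base) (i : ι) : Prop :=
  ∀ k, b.IsPos k → 0 ≤ P.pairingIn ℤ k i

lemma IsDominantRoot.pairingIn_ne_zero [P.IsIrreducible] {i j : ι}
    (hi : IsDominantRoot b i) (hj : IsDominantRoot b j) : P.pairingIn ℤ i j ≠ 0 := by
  intro hij
  obtain ⟨k, hki, hkj⟩ : ∃ k, P.pairingIn ℤ k i ≠ 0 ∧ P.pairingIn ℤ k j ≠ 0 := by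
    simpa only [← P.algebraMap_pairingIn ℤ, ne_eq, FaithfulSMul.algebraMap_eq_zero_iff] using
      exists_pairing_ne_zero_and_pairing_ne_zero P i j
  wlog hk : b.IsPos k generalizing k
  · exact this (P.reflectionPerm k k) (by simpa) (by simpa) ((Base.IsPos.neg_iff_not b k).2 hk)
  have hmi : P.pairingIn ℤ (P.reflectionPerm i k) i < 0 := by
    rw [← P.pairingIn_reflectionPerm, P.pairingIn_reflectionPerm_self_right]
    exact neg_neg_of_pos ((hi k hk).lt_of_ne' hki)
  have hmj : 0 < P.pairingIn ℤ (P.reflectionPerm i k) j := by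
    rw [← coroot'In_rootSpanMem_eq_pairingIn, rootSpanMem_reflectionPerm, map_sub, map_smul,
      coroot'In_rootSpanMem_eq_pairingIn, coroot'In_rootSpanMem_eq_pairingIn, hij, smul_zero,
      sub_zero]
    exact (hj k hk).lt_of_ne' hkj
  rcases Base.IsPos.or_neg b (P.reflectionPerm i k) with hm | hm
  · exact (hi _ hm).not_gt hmi
  · refine (hj _ hm).not_gt ?_
    exact (P.pairingIn_reflectionPerm_self_left ℤ _ _).trans_lt (neg_neg_of_pos hmj)

variable [Finite ι] {g : Dual ℤ (P.rootSpan ℤ)}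

lemma apply_rootSpanMem_nonneg (hg : ∀ i ∈ b.support, 0 ≤ g (P.rootSpanMem ℤ i)) {i : ι}
    (hi : b.IsPos i) : 0 ≤ g (P.rootSpanMem ℤ i) := by
  refine hi.induction_on_add hg fun i j k hk hi hj ↦ ?_
  rw [rootSpanMem_eq_add hk, map_add]
  exact add_nonneg hi (hg j hj)

lemma leviSpan_eq_span_basis (hg : ∀ i ∈ b.support, 0 ≤ g (P.rootSpanMem ℤ i)) :
    leviSpan g = .span ℤ (b.toWeightBasisInt '' {i | g (P.rootSpanMem ℤ i) = 0}) := by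
  let D : Submodule ℤ (P.rootSpan ℤ) :=
    .span ℤ (b.toWeightBasisInt '' {i | g (P.rootSpanMem ℤ i) = 0})
  have hcoe (i : b.support) : b.toWeightBasisInt i = P.rootSpanMem ℤ i := Subtype.ext (by simp)
  have hsimple {i : ι} (hi : i ∈ b.support) (h0 : g (P.rootSpanMem ℤ i) = 0) :
      P.rootSpanMem ℤ i ∈ D :=
    Submodule.subset_span ⟨⟨i, hi⟩, h0, hcoe ⟨i, hi⟩⟩
  have hspan {i : ι} (hi : b.IsPos i) :
      0 ≤ g (P.rootSpanMem ℤ i) ∧ (g (P.rootSpanMem ℤ i) = 0 → P.rootSpanMem ℤ i ∈ D) := by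
    refine hi.induction_on_add
      (p := fun i ↦ 0 ≤ g (P.rootSpanMem ℤ i) ∧ (g (P.rootSpanMem ℤ i) = 0 → P.rootSpanMem ℤ i ∈ D))
      (fun i hi ↦ ⟨hg i hi, hsimple hi⟩) fun i j k hk hi hj ↦ ?_
    have hgj := hg j hj
    rw [rootSpanMem_eq_add hk, map_add]
    refine ⟨add_nonneg hi.1 hgj, fun h0 ↦ add_mem (hi.2 ?_) (hsimple hj ?_)⟩ <;> linarith [hi.1]
  refine le_antisymm (Submodule.span_le.2 ?_) (Submodule.span_mono ?_)
  · rintro _ ⟨i, hi, rfl⟩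
    wlog hpos : b.IsPos i generalizing i
    · rw [SetLike.mem_coe, ← neg_mem_iff, ← P.rootSpanMem_reflectionPerm_self]
      refine this _ ?_ ((Base.IsPos.neg_iff_not b i).2 hpos)
      rwa [Set.mem_ofPred_eq, P.rootSpanMem_reflectionPerm_self, map_neg, neg_eq_zero]
    exact (hspan hpos).2 hi
  · rintro _ ⟨i, hi, rfl⟩
    exact ⟨i, hi, (hcoe i).symm⟩

lemma isTorsionFree_quotient_leviSpan (hg : ∀ i ∈ b.support, 0 ≤ g (P.rootSpanMem ℤ i)) :
    IsTorsionFree ℤ (P.rootSpan ℤ ⧸ leviSpan g) := by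
  rw [leviSpan_eq_span_basis hg]
  exact isTorsionFree_quotient_span_basis_image _ _

lemma exists_isDominantRoot_sub_mem_leviSpan
    (hg : ∀ i ∈ b.support, 0 ≤ g (P.rootSpanMem ℤ i)) {n : ℤ} (hn : 0 < n)
    (hgn : ∀ i, g (P.rootSpanMem ℤ i) ≤ n) {i : ι} (hi : g (P.rootSpanMem ℤ i) = n) :
    ∃ j, IsDominantRoot b j ∧ g (P.rootSpanMem ℤ j) = n ∧
      P.rootSpanMem ℤ j - P.rootSpanMem ℤ i ∈ leviSpan g := by
  let S : Set ι := {j | g (P.rootSpanMem ℤ j) = n ∧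
    P.rootSpanMem ℤ j - P.rootSpanMem ℤ i ∈ leviSpan g}
  obtain ⟨j, ⟨hj, hji⟩, hmax⟩ := S.toFinite.exists_maximalFor b.height S ⟨i, hi, by simp⟩
  refine ⟨j, fun k hk ↦ ?_, hj, hji⟩
  by_contra! hkj
  have hgk : 0 ≤ g (P.rootSpanMem ℤ k) := apply_rootSpanMem_nonneg hg hk
  have hne : P.root k ≠ -P.root j := fun h ↦ by
    have : P.rootSpanMem ℤ k = -P.rootSpanMem ℤ j := Subtype.ext h
    rw [this, map_neg, hj] at hgk
    exact hgk.not_gt (neg_neg_of_pos hn)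
  obtain ⟨l, hl⟩ := P.root_add_root_mem_of_pairingIn_neg hkj hne
  have hgl : g (P.rootSpanMem ℤ l) = g (P.rootSpanMem ℤ k) + n := by
    rw [rootSpanMem_eq_add hl, map_add, hj]
  have hgk0 : g (P.rootSpanMem ℤ k) = 0 := by linarith [hgn l]
  have hlS : l ∈ S := by
    refine ⟨by rw [hgl, hgk0, zero_add], ?_⟩
    rw [rootSpanMem_eq_add hl, add_sub_assoc]
    exact add_mem (rootSpanMem_mem_leviSpan hgk0) hji
  have hlt : b.height j < b.height l := by
    rw [b.height_add hl]
    exact lt_add_of_pos_left _ hk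
  exact (hmax hlS hlt.le).not_gt hlt

lemma IsDominantRoot.sub_mem_leviSpan [P.IsIrreducible]
    (hg : ∀ i ∈ b.support, 0 ≤ g (P.rootSpanMem ℤ i)) {i j : ι}
    (hi : IsDominantRoot b i) (hj : IsDominantRoot b j) (hpos : 0 < g (P.rootSpanMem ℤ i))
    (hij : g (P.rootSpanMem ℤ i) = g (P.rootSpanMem ℤ j)) :
    P.rootSpanMem ℤ i - P.rootSpanMem ℤ j ∈ leviSpan g := by
  have hi_pos : b.IsPos i := by
    by_contra h
    have := apply_rootSpanMem_nonneg hg ((Base.IsPos.neg_iff_not b i).2 h)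
    refine this.not_gt ((congrArg g (P.rootSpanMem_reflectionPerm_self ℤ i)).trans_lt ?_)
    rwa [map_neg, neg_lt_zero]
  obtain rfl | hne := eq_or_ne i j
  · simp
  obtain ⟨l, hl⟩ := P.root_sub_root_mem_of_pairingIn_pos
    ((hj i hi_pos).lt_of_ne' (hi.pairingIn_ne_zero hj)) hne
  rw [← rootSpanMem_eq_sub hl]
  exact rootSpanMem_mem_leviSpan (by rw [rootSpanMem_eq_sub hl, map_sub, hij, sub_self])

end Base

lemma exists_base_forall_apply_nonneg [Finite ι] [P.IsRootSystem] [P.IsReduced]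
    (g : Dual ℤ (P.rootSpan ℤ)) :
    ∃ b : P.Base, ∀ i ∈ b.support, 0 ≤ g (P.rootSpanMem ℤ i) := by
  obtain ⟨h, hh⟩ := exists_dual_int_forall_apply_ne_zero (v := P.rootSpanMem ℤ) fun i hi ↦
    P.ne_zero i (congrArg Subtype.val hi)
  obtain ⟨k, hk0, hk⟩ := exists_pos_forall_abs_lt fun i ↦ h (P.rootSpanMem ℤ i)
  obtain ⟨f, hf⟩ := (Baer.of_divisible ℚ).extension_property_addMonoidHom
    (P.rootSpan ℤ).subtype.toAddMonoidHom Subtype.val_injective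
    ((Int.castAddHom ℚ).comp (k • g + h).toAddMonoidHom)
  have hfr (i : ι) : f (P.root i) =
      ((k * g (P.rootSpanMem ℤ i) + h (P.rootSpanMem ℤ i) : ℤ) : ℚ) :=
    DFunLike.congr_fun hf (P.rootSpanMem ℤ i)
  have hf0 (i : ι) : f (P.root i) ≠ 0 := by
    rw [hfr, Int.cast_ne_zero]
    intro h0
    exact hh i (Int.eq_zero_of_abs_lt_dvd
      ((dvd_add_right (dvd_mul_right _ _)).1 (h0 ▸ dvd_zero k)) (hk i))
  let := P.indexNeg
  refine ⟨Base.mk' P (IsAddIndecomposable.baseOf P.root f) (P.linearIndepOn_root_baseOf f hf0)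
    fun i ↦ IsAddIndecomposable.mem_or_neg_mem_closure_baseOf P.root f i (hf0 i) (by simp),
    fun i hi ↦ ?_⟩
  have hi : 0 < f (P.root i) := ((Set.Finite.mem_toFinset _).1 hi).1
  rw [hfr, Int.cast_pos] at hi
  by_contra! hneg
  nlinarith [(abs_lt.1 (hk i)).2]

section Cyclic

variable [Finite ι] [P.IsIrreducible]

-- Both roots are congruent to dominant roots on which `g` takes the value `n`.
lemma sub_mem_leviSpan_of_apply_eq {b : P.Base} {g : Dual ℤ (P.rootSpan ℤ)}
    (hg : ∀ i ∈ b.support, 0 ≤ g (P.rootSpanMem ℤ i)) {n : ℤ} (hn : 0 < n)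
    (hgn : ∀ i, g (P.rootSpanMem ℤ i) ≤ n) {i j : ι} (hi : g (P.rootSpanMem ℤ i) = n)
    (hj : g (P.rootSpanMem ℤ j) = n) :
    P.rootSpanMem ℤ i - P.rootSpanMem ℤ j ∈ leviSpan g := by
  obtain ⟨i', hi'dom, hi', hii'⟩ := exists_isDominantRoot_sub_mem_leviSpan hg hn hgn hi
  obtain ⟨j', hj'dom, hj', hjj'⟩ := exists_isDominantRoot_sub_mem_leviSpan hg hn hgn hj
  have hij' := hi'dom.sub_mem_leviSpan hg hj'dom (hi' ▸ hn) (hi'.trans hj'.symm)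
  have := add_mem (sub_mem hij' hii') hjj'
  rwa [sub_sub_sub_cancel_left, sub_add_sub_cancel] at this

lemma exists_span_dvd_eq_leviSpan_sup {b : P.Base} {g : Dual ℤ (P.rootSpan ℤ)}
    (hg : ∀ i ∈ b.support, 0 ≤ g (P.rootSpanMem ℤ i)) {n : ℤ} (hn : 0 < n)
    (hgn : ∀ i, |g (P.rootSpanMem ℤ i)| ≤ n) :
    ∃ θ, .span ℤ (P.rootSpanMem ℤ '' {i | n ∣ g (P.rootSpanMem ℤ i)}) =
      leviSpan g ⊔ .span ℤ {θ} := by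
  let S : Submodule ℤ (P.rootSpan ℤ) :=
    .span ℤ (P.rootSpanMem ℤ '' {i | n ∣ g (P.rootSpanMem ℤ i)})
  obtain ⟨θ, hθ, htop⟩ : ∃ θ ∈ S, ∀ i, g (P.rootSpanMem ℤ i) = n →
      P.rootSpanMem ℤ i - θ ∈ leviSpan g := by
    by_cases h : ∃ j, g (P.rootSpanMem ℤ j) = n
    · obtain ⟨j, hj⟩ := h
      exact ⟨P.rootSpanMem ℤ j, Submodule.subset_span ⟨j, hj ▸ dvd_rfl, rfl⟩, fun i hi ↦
        sub_mem_leviSpan_of_apply_eq hg hn (fun i ↦ (abs_le.1 (hgn i)).2) hi hj⟩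
    · exact ⟨0, zero_mem _, fun i hi ↦ absurd ⟨i, hi⟩ h⟩
  have hmem {i : ι} (hi : g (P.rootSpanMem ℤ i) = n) :
      P.rootSpanMem ℤ i ∈ leviSpan g ⊔ .span ℤ {θ} :=
    Submodule.mem_sup.2 ⟨_, htop i hi, θ, Submodule.mem_span_singleton_self θ, sub_add_cancel _ _⟩
  refine ⟨θ, le_antisymm (Submodule.span_le.2 ?_) (sup_le (Submodule.span_mono ?_) ?_)⟩
  · rintro _ ⟨i, hi, rfl⟩
    obtain h | h | h := eq_zero_or_eq_or_eq_neg_of_dvd_of_abs_le hi (hgn i)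
    · exact Submodule.mem_sup_left (rootSpanMem_mem_leviSpan h)
    · exact hmem h
    · rw [SetLike.mem_coe, ← neg_mem_iff, ← P.rootSpanMem_reflectionPerm_self]
      exact hmem (by rw [P.rootSpanMem_reflectionPerm_self, map_neg, h, neg_neg])
  · exact Set.image_mono fun i (hi : _ = 0) ↦ (dvd_zero n).trans hi.symm.dvd
  · exact (Submodule.span_singleton_le_iff_mem _ _).2 hθ

variable [P.IsRootSystem] [P.IsReduced]

lemma isAddCyclic_torsion_of_ker_eq_span_dvd {B : Type*} [AddCommGroup B]
    {π : P.rootSpan ℤ →ₗ[ℤ] B} (hπ : Function.Surjective π) {n : ℤ} (hn : 0 < n)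
    {g : Dual ℤ (P.rootSpan ℤ)}
    (hker : LinearMap.ker π = .span ℤ (P.rootSpanMem ℤ '' {i | n ∣ g (P.rootSpanMem ℤ i)})) :
    IsAddCyclic (AddCommGroup.torsion B) := by
  obtain ⟨g', hg', hg'n⟩ := exists_dual_forall_dvd_sub_and_abs_le g hn
  obtain ⟨b, hb⟩ := exists_base_forall_apply_nonneg g'
  obtain ⟨θ, hθ⟩ := exists_span_dvd_eq_leviSpan_sup hb hn hg'n
  have hdvd (x) : n ∣ g' x ↔ n ∣ g x := dvd_iff_dvd_of_dvd_sub (hg' x)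
  simp only [hdvd] at hθ
  have := isTorsionFree_quotient_leviSpan hb
  exact isAddCyclic_torsion_of_ker_eq_sup_span_singleton hπ (hker.trans hθ)

theorem exists_rootSpanMem_map_mem_torsion_subgroup {B : Type*} [AddCommGroup B]
    {π : P.rootSpan ℤ →ₗ[ℤ] B} (hπ : Function.Surjective π)
    (hker : LinearMap.ker π = .span ℤ (P.rootSpanMem ℤ '' {i | π (P.rootSpanMem ℤ i) = 0}))
    (hB : ¬ IsAddCyclic (AddCommGroup.torsion B))
    (N : AddSubgroup (AddCommGroup.torsion B)) [IsAddCyclic (AddCommGroup.torsion B ⧸ N)] :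
    ∃ i, π (P.rootSpanMem ℤ i) ≠ 0 ∧
      ∃ h : π (P.rootSpanMem ℤ i) ∈ AddCommGroup.torsion B, ⟨π (P.rootSpanMem ℤ i), h⟩ ∈ N := by
  have : Module.Finite ℤ B := .of_surjective π hπ
  obtain ⟨n, g, hn, hdvd, hmem⟩ := exists_dual_int_dvd_imp_mem π (P.rootSpanMem ℤ) N
  by_contra! hN
  refine hB (isAddCyclic_torsion_of_ker_eq_span_dvd hπ hn (g := g) ?_)
  have hzero (i : ι) : π (P.rootSpanMem ℤ i) = 0 ↔ n ∣ g (P.rootSpanMem ℤ i) := by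
    refine ⟨hdvd _, fun hi ↦ by_contra fun hi0 ↦ ?_⟩
    obtain ⟨h, hN'⟩ := hmem i hi
    exact hN i hi0 h hN'
  simpa only [hzero] using hker

end Cyclic

end RootSystem

section RootLattice

variable (L : Type*) [LieRing L] [LieAlgebra ℂ L] [FiniteDimensional ℂ L]

lemma range_root_rootSystem [IsKilling ℂ L] (H : LieSubalgebra ℂ L) [H.IsCartanSubalgebra] :
    Set.range (IsKilling.rootSystem H).root = lieRoots L H := by
  ext α
  constructor
  · rintro ⟨i, rfl⟩
    rw [IsKilling.rootSystem_root_apply]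
    refine ⟨fun h ↦ ?_, i.1.genWeightSpace_ne_bot⟩
    have hi : i.1.IsNonZero := (Finset.mem_filter.1 i.2).2
    exact hi (congrArg DFunLike.coe h)
  · rintro ⟨h0, hα⟩
    let w : LieModule.Weight ℂ H L := ⟨α, hα⟩
    have hw : w.IsNonZero := fun h ↦ h0 (DFunLike.coe_injective h)
    exact ⟨⟨w, by simpa using hw⟩, DFunLike.coe_injective rfl⟩

lemma toAddSubgroup_rootSpan [IsKilling ℂ L] (H : LieSubalgebra ℂ L) [H.IsCartanSubalgebra] :
    ((IsKilling.rootSystem H).rootSpan ℤ).toAddSubgroup = AddSubgroup.closure (lieRoots L H) := by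
  rw [← range_root_rootSystem]
  exact Submodule.span_int_eq_addSubgroupClosure _

variable [IsKilling ℂ L] (H : LieSubalgebra ℂ L) [H.IsCartanSubalgebra]
  (P : Set (Dual ℂ H))

/-- The projection of the root lattice, as the `ℤ`-span of the root system of `L`, onto `Γ_𝔨`. -/
noncomputable def toGammaK : (IsKilling.rootSystem H).rootSpan ℤ →ₗ[ℤ] GammaK L H P :=
  ((QuotientAddGroup.mk' _).comp
    (AddSubgroup.inclusion (toAddSubgroup_rootSpan L H).le)).toIntLinearMap

lemma toGammaK_surjective : Function.Surjective (toGammaK L H P) := by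
  rintro ⟨x, hx⟩
  exact ⟨⟨x, (toAddSubgroup_rootSpan L H).ge hx⟩, rfl⟩

instance finite_gammaK : Module.Finite ℤ (GammaK L H P) :=
  .of_surjective (toGammaK L H P) (toGammaK_surjective L H P)

lemma toGammaK_eq_zero_iff (x : (IsKilling.rootSystem H).rootSpan ℤ) :
    toGammaK L H P x = 0 ↔ (x : Dual ℂ H) ∈ AddSubgroup.closure P :=
  QuotientAddGroup.eq_zero_iff _

lemma ker_toGammaK {P} (hP : P ⊆ lieRoots L H) :
    LinearMap.ker (toGammaK L H P) =
      .span ℤ ((IsKilling.rootSystem H).rootSpanMem ℤ ''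
        {i | toGammaK L H P ((IsKilling.rootSystem H).rootSpanMem ℤ i) = 0}) := by
  let R := IsKilling.rootSystem H
  let S : Submodule ℤ (R.rootSpan ℤ) :=
    .span ℤ (R.rootSpanMem ℤ '' {i | toGammaK L H P (R.rootSpanMem ℤ i) = 0})
  have hPS : AddSubgroup.closure P ≤ (S.map (R.rootSpan ℤ).subtype).toAddSubgroup := by
    refine (AddSubgroup.closure_le _).2 fun α hα ↦ ?_
    obtain ⟨i, rfl⟩ := (range_root_rootSystem L H).ge (hP hα)
    refine ⟨R.rootSpanMem ℤ i, Submodule.subset_span ⟨i, ?_, rfl⟩, rfl⟩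
    exact (toGammaK_eq_zero_iff L H P _).2 (AddSubgroup.subset_closure hα)
  refine le_antisymm (fun x hx ↦ ?_) (Submodule.span_le.2 ?_)
  · obtain ⟨y, hy, hyx⟩ := hPS ((toGammaK_eq_zero_iff L H P x).1 hx)
    rwa [← Subtype.ext hyx]
  · rintro _ ⟨i, hi, rfl⟩
    exact hi

end RootLattice

theorem torsion_noncyclic_character_kernel_contains_root_image_general
    (L : Type*) [LieRing L] [LieAlgebra ℂ L] [FiniteDimensional ℂ L] [LieAlgebra.IsSimple ℂ L]
    (H : LieSubalgebra ℂ L) [H.IsCartanSubalgebra] (P : Set (Dual ℂ H)) (hP : P ⊆ lieRoots L H)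
    (hnc : ¬ IsAddCyclic (AddCommGroup.torsion (GammaK L H P)))
    (N : AddSubgroup (AddCommGroup.torsion (GammaK L H P)))
    [IsAddCyclic (AddCommGroup.torsion (GammaK L H P) ⧸ N)] :
    ∃ (α : Dual ℂ H) (hα : α ∈ lieRoots L H)
      (hmem : rootImage L H P hα ∈ AddCommGroup.torsion (GammaK L H P)),
      rootImage L H P hα ≠ 0 ∧ ⟨rootImage L H P hα, hmem⟩ ∈ N := by
  obtain ⟨i, hne, hmem, hN⟩ := exists_rootSpanMem_map_mem_torsion_subgroup
    (toGammaK_surjective L H P) (ker_toGammaK L H hP) hnc N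
  exact ⟨_, (range_root_rootSystem L H).le ⟨i, rfl⟩, hmem, hne, hN⟩

/-- If `𝔤` is simple and `Tor(Γ_𝔨)` is not cyclic, then the kernel of any character
`χ : Tor(Γ_𝔨) → ℂ∖{0}` contains a nonzero image of a root. -/
theorem torsion_noncyclic_character_kernel_contains_root_image
    (L : Type*) [LieRing L] [LieAlgebra ℂ L] [FiniteDimensional ℂ L]
    [LieAlgebra.IsSimple ℂ L]
    (H : LieSubalgebra ℂ L) [H.IsCartanSubalgebra]
    (P : Set (Module.Dual ℂ H))
    (hP : IsClosedSymmetricSubsystem (lieRoots L H) P)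
    (hnc : ¬ IsAddCyclic ↥(AddCommGroup.torsion (GammaK L H P)))
    (χ : ↥(AddCommGroup.torsion (GammaK L H P)) → ℂ)
    (hmul : ∀ x y, χ (x + y) = χ x * χ y)
    (hne : ∀ x, χ x ≠ 0) :
    ∃ (α : Module.Dual ℂ H) (hα : α ∈ lieRoots L H)
      (hmem : rootImage L H P hα ∈ AddCommGroup.torsion (GammaK L H P)),
      rootImage L H P hα ≠ 0 ∧ χ ⟨rootImage L H P hα, hmem⟩ = 1 := by
  have hone : χ 0 = 1 := mul_right_cancel₀ (hne 0) (by rw [← hmul, add_zero, one_mul])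
  let ψ : AddChar (AddCommGroup.torsion (GammaK L H P)) ℂ := ⟨χ, hone, hmul⟩
  have := isAddCyclic_quotient_ker_addChar ψ
  exact torsion_noncyclic_character_kernel_contains_root_image_general L H P hP.1 hnc
    ψ.toAddMonoidHom.ker
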